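/- Uniqueness of the stabilization function: let V > 0, μ > 0, C > 0, h > 0, D = μV, and φ₁ ≠ φ₂ with n₁ = C·exp(φ₁/V), n₂ = C·exp(φ₂/V). Then there is exactly one real number Φ such that μ·((n₁ + n₂)/2)·(−(φ₂ − φ₁)/h) + D·(1 + Φ)·(n₂ − n₁)/h = 0, and it equals B(2Pe) + Pe − 1 with Pe = |φ₂ − φ₁|/(2V). -/

import Mathlib

/-- The Bernoulli-type function `B(Z) = Z/(exp Z − 1)` for `Z ≠ 0`, with `B(0) = 1`. -/
noncomputable def sgBern (Z : ℝ) : ℝ := if Z = 0 then 1 else Z / (Real.exp Z - 1)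

theorem sg_aux (z : ℝ) (hz : z ≠ 0) :
    (sgBern |z| + |z| / 2) * (Real.exp z - 1) = z * (1 + Real.exp z) / 2 := by
  have h1 : Real.exp z - 1 ≠ 0 := by
    rw [sub_ne_zero]
    simpa using hz
  have hp := Real.exp_pos z
  rw [sgBern, if_neg (abs_ne_zero.mpr hz)]
  rcases abs_choice z with h | h
  · rw [h]
    field_simp
    ring
  · rw [h, Real.exp_neg]
    have h2 : (Real.exp z)⁻¹ - 1 = -(Real.exp z - 1) / Real.exp z := by
      field_simp
      ring
    rw [h2]
    field_simp
    ring

/-- Uniqueness of the stabilization function: on thermal-equilibrium nodal data there is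
exactly one real number `Φ` making the stabilized 1D flux vanish, and it equals
`B(2Pe) + Pe − 1` with `Pe = |φ₂ − φ₁|/(2V)`. -/
theorem sg_stabilization_unique
    (V μ C h D φ₁ φ₂ n₁ n₂ Pe : ℝ)
    (hV : 0 < V) (hμ : 0 < μ) (hC : 0 < C) (hh : 0 < h) (hD : D = μ * V)
    (hφ : φ₁ ≠ φ₂)
    (hn₁ : n₁ = C * Real.exp (φ₁ / V)) (hn₂ : n₂ = C * Real.exp (φ₂ / V))
    (hPe : Pe = |φ₂ - φ₁| / (2 * V)) :
    (∃! Φ : ℝ,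
      μ * ((n₁ + n₂) / 2) * (-(φ₂ - φ₁) / h) +
          D * (1 + Φ) * ((n₂ - n₁) / h) = 0) ∧
    (∀ Φ : ℝ,
      μ * ((n₁ + n₂) / 2) * (-(φ₂ - φ₁) / h) +
          D * (1 + Φ) * ((n₂ - n₁) / h) = 0 →
      Φ = sgBern (2 * Pe) + Pe - 1) := by
  have hd : φ₂ - φ₁ ≠ 0 := sub_ne_zero.mpr hφ.symm
  obtain ⟨z, hz⟩ : ∃ z, z = (φ₂ - φ₁) / V := ⟨_, rfl⟩
  have hz0 : z ≠ 0 := by rw [hz]; exact div_ne_zero hd hV.ne'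
  have hdz : φ₂ - φ₁ = z * V := by rw [hz]; field_simp
  have hP : 2 * Pe = |z| := by
    rw [hPe, hz, abs_div, abs_of_pos hV]; field_simp
  have hP2 : Pe = |z| / 2 := by linarith
  have hn : n₂ = n₁ * Real.exp z := by
    rw [hn₁, hn₂, mul_assoc, ← Real.exp_add, hz]
    congr 2
    field_simp
    ring
  have hn0 : n₁ ≠ 0 := by rw [hn₁]; positivity
  have h1 : Real.exp z - 1 ≠ 0 := by
    rw [sub_ne_zero]
    simpa using hz0
  have key : ∀ Φ : ℝ, μ * ((n₁ + n₂) / 2) * (-(φ₂ - φ₁) / h) +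
          D * (1 + Φ) * ((n₂ - n₁) / h) = 0 ↔ Φ = sgBern (2 * Pe) + Pe - 1 := by
    intro Φ
    have e : μ * ((n₁ + n₂) / 2) * (-(φ₂ - φ₁) / h) +
          D * (1 + Φ) * ((n₂ - n₁) / h) =
        (μ * V * n₁ / h * (Real.exp z - 1)) * (Φ - (sgBern (2 * Pe) + Pe - 1)) := by
      rw [hdz, hn, hD, hP, hP2]
      linear_combination (μ * V * n₁ / h) * sg_aux z hz0
    rw [e, mul_eq_zero, sub_eq_zero]
    have : μ * V * n₁ / h * (Real.exp z - 1) ≠ 0 :=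
      mul_ne_zero (div_ne_zero (mul_ne_zero (mul_ne_zero hμ.ne' hV.ne') hn0) hh.ne') h1
    simp only [this, false_or]
  exact ⟨⟨_, (key _).2 rfl, fun y hy => (key y).1 hy⟩, fun Φ hΦ => (key Φ).1 hΦ⟩
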